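/- arXiv:2509.17705 — 3 statements merged into one kernel-verified Lean document; each statement's English description precedes it below -/
import Mathlib

section
/- For all nonnegative integers t and all n ≥ 0, the number of overpartition t-tuples satisfies p̄_t(8n+5) ≡ 0 (mod 8). -/
/-- The number of overpartitions of `n`: a partition of `n` together with a
choice of which distinct part values are overlined (the first occurrence of a
part value may be overlined), so that the count is `∑_{λ ⊢ n} 2^{#distinct parts of λ}`. -/
def overpartitionCount (n : ℕ) : ℕ :=
  ∑ p : n.Partition, 2 ^ p.parts.toFinset.card

/-- The number of overpartition `t`-tuples of `n`: `t`-tuples of overpartitions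
whose sizes sum to `n`. -/
def overpartitionTuples (t n : ℕ) : ℕ :=
  ∑ c ∈ Finset.Nat.antidiagonalTuple t n, ∏ i, overpartitionCount (c i)

/-!
The identity of Gauss `∏ (1 - q^n) / (1 + q^n) = 1 + 2 θ`, where `θ = ∑_{k ≥ 1} (-1)^k q^(k²)`,
says that the generating function of overpartitions is `P = (1 + 2 θ)⁻¹`. Since
`(1 + 2 θ)^4 ≡ 1 (mod 8)`, this gives
`P^t ≡ (1 + 2 θ)^(3 t) ≡ 1 + 6 t θ + 4 (3t choose 2) θ² (mod 8)`.
The coefficient of `q^N` in `θ` vanishes unless `N` is a square, and the one in `θ²` is even unless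
`N` is twice a square, because exchanging the summands of `N = a² + b²` has no fixed point.
Modulo `8`, the number `8n + 5` is not a square, and it is odd.

The identity of Gauss is the limit of a finite identity of Shanks, which is proved by telescoping.
-/

open Filter Finset PowerSeries PowerSeries.WithPiTopology Topology

section ShanksIdentity

variable {A : Type*} [CommRing A] (q : A)

/-- The correction terms in the finite form, due to Shanks, of the identity of Gauss, multiplied by
`∏_{j = 1}^n (1 + q^j)` in order to avoid denominators; `k` is shifted by one, so that it ranges
over `0, …, n - 1`. -/
def shanksTerm (n k : ℕ) : A :=
  q ^ ((k + 1) * (n + 1)) *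
    ((∏ j ∈ range k, (1 + q ^ (j + 1))) * ∏ j ∈ Ico (k + 1) n, (1 - q ^ (j + 1)))

theorem shanksTerm_self (n : ℕ) :
    shanksTerm q (n + 1) n = q ^ ((n + 1) * (n + 2)) * ∏ j ∈ range n, (1 + q ^ (j + 1)) := by
  simp [shanksTerm]

theorem sum_shanksTerm_succ (n : ℕ) :
    ∑ k ∈ range n, (-1) ^ (k + 1) * shanksTerm q (n + 1) k =
      (1 + q ^ (n + 1)) * ∑ k ∈ range n, (-1) ^ (k + 1) * shanksTerm q n k +
        (q ^ (n + 1) * ∏ j ∈ range n, (1 - q ^ (j + 1)) -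
          (-1) ^ n * (q ^ (n + 1) ^ 2 * ∏ j ∈ range n, (1 + q ^ (j + 1)))) := by
  let c (k : ℕ) : A := (-1) ^ k * (q ^ ((k + 1) * (n + 1)) *
    ((∏ j ∈ range k, (1 + q ^ (j + 1))) * ∏ j ∈ Ico k n, (1 - q ^ (j + 1))))
  have telescope (k : ℕ) (hk : k < n) : (-1) ^ (k + 1) * shanksTerm q (n + 1) k =
      (1 + q ^ (n + 1)) * ((-1) ^ (k + 1) * shanksTerm q n k) + (c k - c (k + 1)) := by
    simp only [c, shanksTerm, prod_Ico_succ_top (Nat.succ_le_of_lt hk),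
      prod_range_succ, prod_eq_prod_Ico_succ_bot hk]
    ring
  rw [sum_congr rfl fun k hk ↦ telescope k (mem_range.mp hk), sum_add_distrib, ← mul_sum,
    sum_range_sub']
  simp [c, sq]

theorem prod_one_add_pow_mul_one_add_two_mul_sum (n : ℕ) :
    (∏ j ∈ range n, (1 + q ^ (j + 1))) *
        (1 + 2 * ∑ k ∈ range n, (-1) ^ (k + 1) * q ^ (k + 1) ^ 2) =
      (∏ j ∈ range n, (1 - q ^ (j + 1))) +
        2 * ∑ k ∈ range n, (-1) ^ (k + 1) * shanksTerm q n k := by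
  induction n with
  | zero => simp
  | succ n ih =>
    rw [prod_range_succ, prod_range_succ, sum_range_succ, sum_range_succ _ n,
      sum_shanksTerm_succ, shanksTerm_self]
    linear_combination (1 + q ^ (n + 1)) * ih

theorem pow_succ_dvd_sum_shanksTerm (n : ℕ) :
    q ^ (n + 1) ∣ ∑ k ∈ range n, (-1) ^ (k + 1) * shanksTerm q n k :=
  dvd_sum fun k _ ↦ dvd_mul_of_dvd_right (dvd_mul_of_dvd_left
    (pow_dvd_pow q (Nat.le_mul_of_pos_left _ k.succ_pos)) _) _

end ShanksIdentity

section GaussIdentity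

variable (R : Type*) [CommRing R]

/-- The power series `∑_{k ≥ 1} (-1)^k X^(k²)`, called `θ` above. The sign is written as `(-1)^n`
for `n = k²`, which has the parity of `k`. -/
noncomputable def signedSquareSeries : R⟦X⟧ :=
  .mk fun n ↦ if n ≠ 0 ∧ IsSquare n then (-1) ^ n else 0

variable {R} in
theorem coeff_signedSquareSeries_eq_zero {n : ℕ} (hn : ∀ m, n ≠ m ^ 2) :
    (signedSquareSeries R).coeff n = 0 := by
  simp [signedSquareSeries, isSquare_iff_exists_sq, hn]

variable [TopologicalSpace R]

theorem hasSum_signedSquareSeries :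
    HasSum (fun k : ℕ ↦ ((-1) ^ (k + 1) * X ^ (k + 1) ^ 2 : R⟦X⟧)) (signedSquareSeries R) := by
  have injective : Function.Injective fun k : ℕ ↦ (k + 1) ^ 2 := fun a b h ↦ by
    simpa using h
  have h := hasSum_of_monomials_self (signedSquareSeries R)
  rw [← injective.hasSum_iff] at h
  · convert h using 2 with k
    have parity : (-1 : R) ^ (k + 1) ^ 2 = (-1) ^ (k + 1) := by
      rw [sq, pow_mul]
      rcases neg_one_pow_eq_or R (k + 1) with h | h <;> simp [h]
    simp [signedSquareSeries, monomial_eq_C_mul_X_pow, IsSquare.sq, parity]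
  · intro n hn
    have : ¬ (n ≠ 0 ∧ IsSquare n) := by
      rintro ⟨hn0, m, rfl⟩
      exact hn ⟨m - 1, by grind⟩
    simp [signedSquareSeries, this]

variable {R} in
theorem tendsto_zero_of_X_pow_dvd {f : ℕ → R⟦X⟧} (h : ∀ n, X ^ n ∣ f n) :
    Tendsto f atTop (𝓝 0) := by
  rw [tendsto_iff_coeff_tendsto]
  exact fun d ↦ tendsto_atTop_of_eventually_const fun n (hn : d + 1 ≤ n) ↦ by
    simpa using X_pow_dvd_iff.mp (h n) d hn

theorem multipliable_one_add_X_pow : Multipliable fun n ↦ (1 : R⟦X⟧) + X ^ (n + 1) := by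
  nontriviality R
  refine multipliable_one_add_of_tendsto_order_atTop_nhds_top R ?_
  simp_rw [order_X_pow]
  exact ENat.tendsto_natCast_nhds_top.comp (tendsto_add_atTop_nat 1)

variable [T2Space R]

theorem isUnit_tprod_one_sub_X_pow : IsUnit (∏' n, (1 - X ^ (n + 1) : R⟦X⟧)) := by
  rw [isUnit_iff_constantCoeff, (multipliable_one_sub_X_pow R).map_tprod _
    (continuous_constantCoeff R)]
  simp

variable [IsTopologicalRing R]

theorem tprod_one_add_X_pow_mul_one_add_two_mul_signedSquareSeries :
    (∏' n, (1 + X ^ (n + 1) : R⟦X⟧)) * (1 + 2 * signedSquareSeries R) =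
      ∏' n, (1 - X ^ (n + 1)) := by
  have remainder : Tendsto (fun n ↦ ∑ k ∈ range n, (-1) ^ (k + 1) * shanksTerm (X : R⟦X⟧) n k)
      atTop (𝓝 0) :=
    tendsto_zero_of_X_pow_dvd fun n ↦
      (pow_dvd_pow X n.le_succ).trans (pow_succ_dvd_sum_shanksTerm X n)
  have lhs := (multipliable_one_add_X_pow R).hasProd.tendsto_prod_nat.mul
    (((hasSum_signedSquareSeries R).tendsto_sum_nat.const_mul 2).const_add 1)
  have rhs := (multipliable_one_sub_X_pow R).hasProd.tendsto_prod_nat.add (remainder.const_mul 2)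
  simp_rw [prod_one_add_pow_mul_one_add_two_mul_sum] at lhs
  simpa using tendsto_nhds_unique lhs rhs

end GaussIdentity

theorem coeff_prod_fin {R : Type*} [CommSemiring R] {t : ℕ} (f : Fin t → R⟦X⟧) (n : ℕ) :
    (∏ i, f i).coeff n = ∑ c ∈ Nat.antidiagonalTuple t n, ∏ i, (f i).coeff (c i) := by
  rw [coeff_prod]
  exact sum_equiv Finsupp.equivFunOnFinite (by simp [Nat.mem_antidiagonalTuple]) (by simp)

section OverpartitionSeries

variable (R : Type*) [CommRing R]

/-- The generating function of the numbers of overpartitions, with coefficients in `R`. -/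
noncomputable def overpartitionSeries : R⟦X⟧ :=
  .mk fun n ↦ (overpartitionCount n : R)

theorem overpartitionSeries_eq_genFun :
    overpartitionSeries R = Nat.Partition.genFun fun _ _ ↦ (2 : R) := by
  ext n
  simp [overpartitionSeries, overpartitionCount, Finsupp.prod]

theorem overpartitionSeries_mul_tprod_one_sub_X_pow [TopologicalSpace R] [T2Space R]
    [IsTopologicalRing R] :
    overpartitionSeries R * ∏' n, (1 - X ^ (n + 1)) = ∏' n, (1 + X ^ (n + 1)) := by
  rw [overpartitionSeries_eq_genFun, Nat.Partition.genFun_eq_tprod,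
    ← (Nat.Partition.multipliable_genFun fun _ _ ↦ (2 : R)).tprod_mul
      (multipliable_one_sub_X_pow R)]
  refine tprod_congr fun i ↦ ?_
  have hX : ((X : R⟦X⟧) ^ (i + 1)).constantCoeff = 0 := by simp
  have geometric := one_sub_mul_tsum_pow_of_constantCoeff_eq_zero hX
  have factor : ∑' j, (2 : R) • (X : R⟦X⟧) ^ ((i + 1) * (j + 1)) =
      2 * X ^ (i + 1) * ∑' j, (X ^ (i + 1)) ^ j := by
    rw [← (summable_pow_of_constantCoeff_eq_zero hX).tsum_mul_left]
    refine tsum_congr fun j ↦ ?_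
    rw [smul_eq_C_mul, map_ofNat]
    ring
  rw [factor]
  linear_combination 2 * X ^ (i + 1) * geometric

theorem overpartitionSeries_mul_one_add_two_mul_signedSquareSeries :
    overpartitionSeries R * (1 + 2 * signedSquareSeries R) = 1 := by
  let : TopologicalSpace R := ⊥
  have : DiscreteTopology R := ⟨rfl⟩
  refine (isUnit_tprod_one_sub_X_pow R).mul_left_cancel ?_
  rw [mul_one, ← mul_assoc, mul_comm (∏' n, _), overpartitionSeries_mul_tprod_one_sub_X_pow,
    tprod_one_add_X_pow_mul_one_add_two_mul_signedSquareSeries]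

theorem coeff_overpartitionSeries_pow (t n : ℕ) :
    (overpartitionSeries R ^ t).coeff n = overpartitionTuples t n := by
  rw [← Fin.prod_const, coeff_prod_fin]
  simp [overpartitionSeries, overpartitionTuples]

end OverpartitionSeries

theorem one_add_two_mul_pow_of_eight_eq_zero {A : Type*} [CommRing A] (h : (8 : A) = 0) (x : A)
    (t : ℕ) : (1 + 2 * x) ^ t = 1 + 2 * t * x + 4 * t.choose 2 * x ^ 2 := by
  induction t with
  | zero => simp
  | succ t ih =>
    rw [pow_succ, ih, Nat.choose_succ_succ' t 1, Nat.choose_one_right]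
    push_cast
    linear_combination t.choose 2 * x ^ 3 * h

theorem two_dvd_coeff_sq {R : Type*} [CommRing R] (f : R⟦X⟧) {n : ℕ}
    (h : ∀ m, n = 2 * m → 2 ∣ f.coeff m) : 2 ∣ (f ^ 2).coeff n := by
  have mk_eq_zero_iff (r : R) : Ideal.Quotient.mk (Ideal.span {2}) r = 0 ↔ 2 ∣ r := by
    rw [Ideal.Quotient.eq_zero_iff_mem, Ideal.mem_span_singleton]
  rw [← mk_eq_zero_iff, sq, coeff_mul, map_sum]
  refine sum_involution (fun x _ ↦ x.swap) (fun x _ ↦ ?_) (fun x hx hne hfix ↦ hne ?_)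
    (fun x hx ↦ by simpa [add_comm] using hx) (fun x _ ↦ x.swap_swap)
  · rw [← map_add, mk_eq_zero_iff]
    exact ⟨f.coeff x.1 * f.coeff x.2, by simp only [Prod.fst_swap, Prod.snd_swap]; ring⟩
  · have diagonal : n = 2 * x.1 := by
      rw [← mem_antidiagonal.mp hx, two_mul, add_right_inj]
      exact congrArg Prod.fst hfix
    exact (mk_eq_zero_iff _).mpr (dvd_mul_of_dvd_left (h x.1 diagonal) _)

theorem overpartitionSeries_pow_of_eight_eq_zero {R : Type*} [CommRing R] (h : (8 : R) = 0)
    (t : ℕ) :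
    overpartitionSeries R ^ t = 1 + (6 * t) • signedSquareSeries R +
      (4 * (3 * t).choose 2) • signedSquareSeries R ^ 2 := by
  have eight_eq_zero : (8 : R⟦X⟧) = 0 := by rw [← map_ofNat C 8, h, map_zero]
  have inverse := overpartitionSeries_mul_one_add_two_mul_signedSquareSeries R
  have pow_four : (1 + 2 * signedSquareSeries R) ^ 4 = 1 := by
    rw [one_add_two_mul_pow_of_eight_eq_zero eight_eq_zero, (by decide : Nat.choose 4 2 = 6)]
    linear_combination (signedSquareSeries R + 3 * signedSquareSeries R ^ 2) * eight_eq_zero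
  have eq_cube : overpartitionSeries R = (1 + 2 * signedSquareSeries R) ^ 3 := by
    linear_combination (1 + 2 * signedSquareSeries R) ^ 3 * inverse -
      overpartitionSeries R * pow_four
  rw [eq_cube, ← pow_mul, one_add_two_mul_pow_of_eight_eq_zero eight_eq_zero]
  simp only [nsmul_eq_mul]
  push_cast
  ring

theorem overpartitionTuples_eight_n_five_mod_eight_general (t : ℕ) {N : ℕ}
    (not_sq : ∀ m, N ≠ m ^ 2) (not_two_mul_sq : ∀ m, N ≠ 2 * m ^ 2) :
    overpartitionTuples t N ≡ 0 [MOD 8] := by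
  have coeff_theta : (signedSquareSeries (ZMod 8)).coeff N = 0 :=
    coeff_signedSquareSeries_eq_zero not_sq
  obtain ⟨a, coeff_theta_sq⟩ : 2 ∣ (signedSquareSeries (ZMod 8) ^ 2).coeff N := by
    refine two_dvd_coeff_sq _ fun m hm ↦ ?_
    rw [coeff_signedSquareSeries_eq_zero fun r hr ↦ not_two_mul_sq r (by rw [hm, hr])]
    exact dvd_zero 2
  have eight_eq_zero : (8 : ZMod 8) = 0 := by decide
  rw [← ZMod.natCast_eq_natCast_iff, ← coeff_overpartitionSeries_pow,
    overpartitionSeries_pow_of_eight_eq_zero eight_eq_zero, map_add, map_add, map_nsmul, map_nsmul,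
    coeff_theta, coeff_theta_sq, coeff_one, if_neg (by simpa using not_sq 0), nsmul_eq_mul]
  push_cast
  linear_combination (3 * t).choose 2 * a * eight_eq_zero

theorem overpartitionTuples_eight_n_five_mod_eight (t n : ℕ) :
    overpartitionTuples t (8 * n + 5) ≡ 0 [MOD 8] := by
  refine overpartitionTuples_eight_n_five_mod_eight_general t (fun m h ↦ ?_) fun m ↦ by lia
  have sq_ne_five : ∀ r : ZMod 8, r ^ 2 ≠ 5 := by decide
  have cast_eq_five : ((8 * n + 5 : ℕ) : ZMod 8) = 5 := by
    push_cast
    rw [show (8 : ZMod 8) = 0 by decide, zero_mul, zero_add]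
  exact sq_ne_five m (by rw [← cast_eq_five, h, Nat.cast_pow])
end

section
/- For all nonnegative integers t and all n ≥ 0, the number of overpartition t-tuples satisfies p̄_t(16n+14) ≡ 0 (mod 16). -/
/-!
Write `P` for the generating function of overpartitions and `S = ∑_{k ≥ 1} (-1)^k X^(k²)`. Gauss'
identity says that `P = (1 + 2 S)⁻¹`, so modulo `16` the power `P ^ t` is an integral combination of
`1`, `2 S`, `4 S ^ 2` and `8 S ^ 3`. The coefficient of `X ^ N` in the first three vanishes unless
`N` is a sum of two squares. Since `S ^ 2 ≡ S(X²)` modulo `2`, the coefficient of `X ^ N` in `S ^ 3`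
is even unless `N = a² + 2 b²`.

Gauss' identity is the limit of a finite identity in the style of Shanks: if `Pₙ` is the generating
function of overpartitions with parts at most `n`, then
`(1 + 2 ∑_{k=1}^n (-1)^k X^(k²)) Pₙ = 1 + ∑_{s=1}^n (-1)^s X^(s(n+1)) (P_{s-1} + P_s)`.
-/

open Finset PowerSeries
open scoped PowerSeries.WithPiTopology

section ShanksIdentity

variable {R : Type*} [CommRing R]

/-- The truncation `∑_{|k| ≤ n} (-1)^k q^(k²)` of Gauss' theta series. -/
def partialTheta (q : R) (n : ℕ) : R :=
  1 + 2 * ∑ k ∈ range n, (-1) ^ (k + 1) * q ^ ((k + 1) ^ 2)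

variable {q : R} {P : ℕ → R}

-- The difference of the two sides telescopes along `2 (-1)^s Q^(s+1) P s`.
lemma one_sub_mul_sum_sub_eq_one_add_mul_sum_add (hP₀ : P 0 = 1) (Q : R) (n : ℕ) :
    (1 - Q) * (1 + ∑ s ∈ range n, (-1) ^ (s + 1) * Q ^ (s + 1) * (P (s + 1) - P s)) =
      (1 + Q) * (1 + ∑ s ∈ range n, (-1) ^ (s + 1) * Q ^ (s + 1) * (P s + P (s + 1))) +
        2 * (-1) ^ (n + 1) * Q ^ (n + 1) * P n := by
  induction n with
  | zero => simp only [range_zero, sum_empty, hP₀]; ring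
  | succ n ih =>
    simp only [sum_range_succ]
    linear_combination ih

theorem partialTheta_mul_eq (hq : ∀ n, IsLeftRegular (1 - q ^ (n + 1))) (hP₀ : P 0 = 1)
    (hP : ∀ n, (1 - q ^ (n + 1)) * P (n + 1) = (1 + q ^ (n + 1)) * P n) (n : ℕ) :
    partialTheta q n * P n =
      1 + ∑ s ∈ range n, (-1) ^ (s + 1) * (q ^ (n + 1)) ^ (s + 1) * (P s + P (s + 1)) := by
  induction n with
  | zero => simp [partialTheta, hP₀]
  | succ n ih =>
    have hθ : partialTheta q (n + 1) =
        partialTheta q n + 2 * (-1) ^ (n + 1) * (q ^ (n + 1)) ^ (n + 1) := by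
      simp only [partialTheta, sum_range_succ]
      ring
    have hsub (s : ℕ) : q ^ (s + 1) * (P s + P (s + 1)) = P (s + 1) - P s := by
      linear_combination -hP s
    have hsum : ∑ s ∈ range (n + 1),
          (-1) ^ (s + 1) * (q ^ (n + 1 + 1)) ^ (s + 1) * (P s + P (s + 1)) =
        ∑ s ∈ range (n + 1), (-1) ^ (s + 1) * (q ^ (n + 1)) ^ (s + 1) * (P (s + 1) - P s) :=
      sum_congr rfl fun s _ => by rw [← hsub s]; ring
    rw [hsum, hθ]
    -- It suffices to prove the identity after multiplication by `1 - q ^ (n + 1)`.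
    refine hq n ?_
    have htel := one_sub_mul_sum_sub_eq_one_add_mul_sum_add hP₀ (q ^ (n + 1)) n
    simp only [sum_range_succ]
    linear_combination (1 + q ^ (n + 1)) * ih - htel +
      (partialTheta q n + (-1) ^ (n + 1) * (q ^ (n + 1)) ^ (n + 1)) * hP n

lemma pow_dvd_partialTheta_mul_sub_one (hq : ∀ n, IsLeftRegular (1 - q ^ (n + 1)))
    (hP₀ : P 0 = 1) (hP : ∀ n, (1 - q ^ (n + 1)) * P (n + 1) = (1 + q ^ (n + 1)) * P n) (n : ℕ) :
    q ^ (n + 1) ∣ partialTheta q n * P n - 1 := by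
  rw [partialTheta_mul_eq hq hP₀ hP, add_sub_cancel_left]
  exact dvd_sum fun s _ =>
    Dvd.dvd.mul_right (Dvd.dvd.mul_left (dvd_pow_self _ s.succ_ne_zero) _) _

end ShanksIdentity

section GeneratingFunctions

/-- The generating function of overpartitions. -/
noncomputable def overpartitionGenFun : ℤ⟦X⟧ :=
  PowerSeries.mk fun n => (overpartitionCount n : ℤ)

/-- The generating function of overpartitions with all parts at most `n`. The factor of index `i`
accounts for the part `i + 1`, which carries weight `2` as soon as it occurs. -/
noncomputable def boundedOverpartitionGenFun (n : ℕ) : ℤ⟦X⟧ :=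
  ∏ i ∈ range n, (1 + ∑' j, C (2 : ℤ) * (X : ℤ⟦X⟧) ^ ((i + 1) * (j + 1)))

/-- The series `∑_{k ≥ 1} (-1)^k X^(k²)`, half the nonconstant part of Gauss' theta series. -/
noncomputable def alternatingSquareSeries : ℤ⟦X⟧ :=
  ∑' k : ℕ, (-1) ^ (k + 1) * X ^ ((k + 1) ^ 2)

lemma overpartitionGenFun_eq_genFun :
    overpartitionGenFun = Nat.Partition.genFun fun _ _ => (2 : ℤ) := by
  ext n
  simp [overpartitionGenFun, overpartitionCount, Finsupp.prod]

lemma tendsto_boundedOverpartitionGenFun :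
    Filter.Tendsto boundedOverpartitionGenFun Filter.atTop (nhds overpartitionGenFun) := by
  rw [overpartitionGenFun_eq_genFun]
  have h := (Nat.Partition.hasProd_genFun fun _ _ => (2 : ℤ)).tendsto_prod_nat
  simp only [smul_eq_C_mul] at h
  exact h

lemma one_sub_X_pow_mul_one_add_tsum_C_mul_X_pow {R : Type*} [CommRing R] [TopologicalSpace R]
    [IsTopologicalRing R] [T2Space R] (c : R) {m : ℕ} (hm : m ≠ 0) :
    (1 - (X : R⟦X⟧) ^ m) * (1 + ∑' j, C c * (X : R⟦X⟧) ^ (m * (j + 1))) =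
      1 + C (c - 1) * X ^ m := by
  have hX : constantCoeff ((X : R⟦X⟧) ^ m) = 0 := by simp [hm]
  have hgeom := WithPiTopology.one_sub_mul_tsum_pow_of_constantCoeff_eq_zero hX
  have hsum : ∑' j, C c * (X : R⟦X⟧) ^ (m * (j + 1)) = C c * X ^ m * ∑' j, (X ^ m) ^ j := by
    rw [← (WithPiTopology.summable_pow_of_constantCoeff_eq_zero hX).tsum_mul_left]
    exact tsum_congr fun j => by ring
  rw [hsum, map_sub, map_one]
  linear_combination C c * X ^ m * hgeom

lemma one_sub_mul_boundedOverpartitionGenFun_succ (n : ℕ) :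
    (1 - X ^ (n + 1)) * boundedOverpartitionGenFun (n + 1) =
      (1 + X ^ (n + 1)) * boundedOverpartitionGenFun n := by
  have h := one_sub_X_pow_mul_one_add_tsum_C_mul_X_pow (2 : ℤ) (Nat.add_one_ne_zero n)
  rw [show (2 : ℤ) - 1 = 1 by norm_num, map_one, one_mul] at h
  rw [boundedOverpartitionGenFun, prod_range_succ, ← boundedOverpartitionGenFun]
  linear_combination boundedOverpartitionGenFun n * h

lemma hasSum_alternatingSquareSeries :
    HasSum (fun k : ℕ => (-1 : ℤ⟦X⟧) ^ (k + 1) * X ^ ((k + 1) ^ 2)) alternatingSquareSeries := by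
  refine (WithPiTopology.summable_of_tendsto_order_atTop_nhds_top ℤ ?_).hasSum
  rw [ENat.tendsto_nhds_top_iff_natCast_lt]
  intro n
  filter_upwards [Filter.eventually_ge_atTop n] with k hk
  grw [← le_order_mul, order_X_pow]
  refine lt_add_of_nonneg_of_lt (by simp) ?_
  norm_cast
  nlinarith

lemma tendsto_partialTheta :
    Filter.Tendsto (partialTheta (X : ℤ⟦X⟧)) Filter.atTop
      (nhds (1 + 2 * alternatingSquareSeries)) :=
  (hasSum_alternatingSquareSeries.tendsto_sum_nat.const_mul 2).const_add 1

lemma isSquare_of_coeff_alternatingSquareSeries_ne_zero {n : ℕ}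
    (hn : coeff n alternatingSquareSeries ≠ 0) : IsSquare n := by
  contrapose! hn
  have hcoeff (k : ℕ) : coeff n ((-1 : ℤ⟦X⟧) ^ (k + 1) * X ^ ((k + 1) ^ 2)) = 0 := by
    have hk : n ≠ (k + 1) ^ 2 := fun h => hn (h ▸ IsSquare.sq (k + 1))
    rcases neg_one_pow_eq_or ℤ⟦X⟧ (k + 1) with h | h <;> simp [h, coeff_X_pow, hk]
  have hsum := (WithPiTopology.hasSum_iff_hasSum_coeff ℤ).mp hasSum_alternatingSquareSeries n
  simp only [hcoeff] at hsum
  exact hsum.unique hasSum_zero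

theorem one_add_two_mul_alternatingSquareSeries_mul_overpartitionGenFun :
    (1 + 2 * alternatingSquareSeries) * overpartitionGenFun = 1 := by
  have hlim := tendsto_partialTheta.mul tendsto_boundedOverpartitionGenFun
  refine tendsto_nhds_unique hlim ?_
  rw [WithPiTopology.tendsto_iff_coeff_tendsto]
  refine fun d => tendsto_atTop_of_eventually_const (i₀ := d) fun n hn => ?_
  have hreg (k : ℕ) : IsLeftRegular (1 - (X : ℤ⟦X⟧) ^ (k + 1)) :=
    (IsUnit.isRegular <| isUnit_iff_constantCoeff.mpr <| by simp).left
  have hdvd := pow_dvd_partialTheta_mul_sub_one hreg (by simp [boundedOverpartitionGenFun])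
    one_sub_mul_boundedOverpartitionGenFun_succ n
  rw [← sub_eq_zero, ← map_sub]
  exact X_pow_dvd_iff.mp hdvd d (Nat.lt_succ_of_le hn)

lemma coeff_pow_eq_sum_antidiagonalTuple {R : Type*} [CommSemiring R] (f : R⟦X⟧) (t n : ℕ) :
    coeff n (f ^ t) = ∑ c ∈ Finset.Nat.antidiagonalTuple t n, ∏ i, coeff (c i) f := by
  have h := coeff_prod (fun _ : Fin t => f) n univ
  rw [prod_const, card_univ, Fintype.card_fin] at h
  rw [h]
  refine sum_equiv Finsupp.equivFunOnFinite (fun l => ?_) fun _ _ => rfl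
  simp [Finset.Nat.mem_antidiagonalTuple]

lemma coeff_overpartitionGenFun_pow (t n : ℕ) :
    coeff n (overpartitionGenFun ^ t) = overpartitionTuples t n := by
  simp [coeff_pow_eq_sum_antidiagonalTuple, overpartitionGenFun, overpartitionTuples]

end GeneratingFunctions

section SquareSupport

lemma coeff_pow_expChar {R : Type*} [CommRing R] (p : ℕ) [ExpChar R p] (f : R⟦X⟧) (n : ℕ) :
    coeff n (f ^ p) = if p ∣ n then coeff (n / p) f ^ p else 0 := by
  have hp : p ≠ 0 := expChar_ne_zero R p
  have h : map (frobenius R p) (expand p hp f) = f ^ p := MvPowerSeries.map_frobenius_expand p hp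
  rw [← h, coeff_map, coeff_expand]
  split_ifs
  · rfl
  · exact map_zero _

lemma coeff_sq_eq_zero_of_forall_sq_add_sq_ne {R : Type*} [Semiring R] {f : R⟦X⟧}
    (hf : ∀ n, coeff n f ≠ 0 → IsSquare n) {N : ℕ} (hN : ∀ a b : ℕ, a ^ 2 + b ^ 2 ≠ N) :
    coeff N (f ^ 2) = 0 := by
  rw [sq, coeff_mul]
  refine sum_eq_zero fun ij hij => ?_
  by_contra hne
  obtain ⟨a, ha⟩ := hf _ (left_ne_zero_of_mul hne)
  obtain ⟨b, hb⟩ := hf _ (right_ne_zero_of_mul hne)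
  exact hN a b (by rw [sq, sq, ← ha, ← hb, mem_antidiagonal.mp hij])

lemma coeff_cube_eq_zero_of_forall_sq_add_two_mul_sq_ne {R : Type*} [CommRing R] [CharP R 2]
    {f : R⟦X⟧} (hf : ∀ n, coeff n f ≠ 0 → IsSquare n) {N : ℕ}
    (hN : ∀ a b : ℕ, a ^ 2 + 2 * b ^ 2 ≠ N) : coeff N (f ^ 3) = 0 := by
  rw [pow_succ', coeff_mul]
  refine sum_eq_zero fun ij hij => ?_
  rw [coeff_pow_expChar 2]
  split_ifs with hj
  · by_contra hne
    obtain ⟨a, ha⟩ := hf _ (left_ne_zero_of_mul hne)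
    obtain ⟨b, hb⟩ := hf _ (ne_zero_pow two_ne_zero (right_ne_zero_of_mul hne))
    refine hN a b ?_
    rw [sq, sq, ← ha, ← hb, Nat.mul_div_cancel' hj, mem_antidiagonal.mp hij]
  · exact mul_zero _

variable {f : ℤ⟦X⟧} {N : ℕ}

lemma two_dvd_coeff_cube_of_forall_sq_add_two_mul_sq_ne (hf : ∀ n, coeff n f ≠ 0 → IsSquare n)
    (hN : ∀ a b : ℕ, a ^ 2 + 2 * b ^ 2 ≠ N) : 2 ∣ coeff N (f ^ 3) := by
  have hf₂ (n : ℕ) (hn : coeff n (map (Int.castRingHom (ZMod 2)) f) ≠ 0) : IsSquare n :=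
    hf n fun h => hn (by rw [coeff_map, h, map_zero])
  have h := coeff_cube_eq_zero_of_forall_sq_add_two_mul_sq_ne hf₂ hN
  rw [← map_pow, coeff_map] at h
  exact (ZMod.intCast_zmod_eq_zero_iff_dvd _ 2).mp h

lemma two_pow_four_dvd_two_pow_mul_coeff_pow (hf : ∀ n, coeff n f ≠ 0 → IsSquare n)
    (h₁ : ∀ a b : ℕ, a ^ 2 + b ^ 2 ≠ N) (h₂ : ∀ a b : ℕ, a ^ 2 + 2 * b ^ 2 ≠ N) (j : ℕ) :
    2 ^ 4 ∣ 2 ^ j * coeff N (f ^ j) := by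
  match j with
  | 0 =>
    have hN : N ≠ 0 := by simpa using (h₁ 0 0).symm
    simp [coeff_one, hN]
  | 1 =>
    have hN : coeff N f = 0 := by
      by_contra hne
      obtain ⟨a, rfl⟩ := hf N hne
      exact h₁ a 0 (by ring)
    simp [hN]
  | 2 => simp [coeff_sq_eq_zero_of_forall_sq_add_sq_ne hf h₁]
  | 3 =>
    obtain ⟨c, hc⟩ := two_dvd_coeff_cube_of_forall_sq_add_two_mul_sq_ne hf h₂
    exact ⟨c, by rw [hc]; ring⟩
  | j + 4 => exact Dvd.dvd.mul_right (pow_dvd_pow 2 (Nat.le_add_left 4 j)) _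

end SquareSupport

section InversePowers

lemma exists_polynomial_pow_dvd_pow_sub_eval₂ {R : Type*} [CommRing R] {x p : R}
    (hp : (1 + x) * p = 1) (m t : ℕ) :
    ∃ F : Polynomial ℤ, x ^ m ∣ p ^ t - F.eval₂ (Int.castRingHom R) x := by
  refine ⟨(∑ j ∈ range m, (-Polynomial.X) ^ j) ^ t, ?_⟩
  simp only [Polynomial.eval₂_pow, Polynomial.eval₂_finsetSum, Polynomial.eval₂_neg,
    Polynomial.eval₂_X]
  refine Dvd.dvd.trans ⟨(-1) ^ m * p, ?_⟩ (sub_dvd_pow_sub_pow _ _ t)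
  have hgeom := geom_sum_mul_neg (-x) m
  rw [neg_pow x m] at hgeom
  linear_combination (∑ j ∈ range m, (-x) ^ j) * hp - p * hgeom

lemma pow_dvd_coeff_pow_of_one_add_C_mul_mul_eq_one {R : Type*} [CommRing R] {c : R} {f p : R⟦X⟧}
    {m N : ℕ} (hp : (1 + C c * f) * p = 1) (hf : ∀ j, c ^ m ∣ c ^ j * coeff N (f ^ j)) (t : ℕ) :
    c ^ m ∣ coeff N (p ^ t) := by
  obtain ⟨F, w, hw⟩ := exists_polynomial_pow_dvd_pow_sub_eval₂ hp m t
  have hpow (j : ℕ) : (C c * f) ^ j = C (c ^ j) * f ^ j := by rw [mul_pow, map_pow]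
  have heval : c ^ m ∣ coeff N (F.eval₂ (Int.castRingHom R⟦X⟧) (C c * f)) := by
    rw [Polynomial.eval₂_eq_sum_range, map_sum]
    refine dvd_sum fun j _ => ?_
    rw [eq_intCast, ← map_intCast (C (R := R)), coeff_C_mul, hpow, coeff_C_mul]
    exact Dvd.dvd.mul_left (hf j) _
  have hrem : c ^ m ∣ coeff N ((C c * f) ^ m * w) := by
    rw [hpow, mul_assoc, coeff_C_mul]
    exact dvd_mul_right _ _
  rw [sub_eq_iff_eq_add.mp hw, map_add]
  exact dvd_add hrem heval

end InversePowers

lemma sq_mod_sixteen (a : ℕ) :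
    a ^ 2 % 16 = 0 ∨ a ^ 2 % 16 = 1 ∨ a ^ 2 % 16 = 4 ∨ a ^ 2 % 16 = 9 := by
  rw [Nat.pow_mod]
  have : a % 16 < 16 := Nat.mod_lt _ (by norm_num)
  interval_cases a % 16 <;> simp

lemma sq_add_sq_ne_sixteen_mul_add_fourteen (n a b : ℕ) : a ^ 2 + b ^ 2 ≠ 16 * n + 14 := by
  have ha := sq_mod_sixteen a
  have hb := sq_mod_sixteen b
  omega

lemma sq_add_two_mul_sq_ne_sixteen_mul_add_fourteen (n a b : ℕ) :
    a ^ 2 + 2 * b ^ 2 ≠ 16 * n + 14 := by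
  have ha := sq_mod_sixteen a
  have hb := sq_mod_sixteen b
  omega

theorem overpartitionTuples_sixteen_n_fourteen_mod_sixteen_general (t : ℕ) {N : ℕ}
    (h₁ : ∀ a b : ℕ, a ^ 2 + b ^ 2 ≠ N) (h₂ : ∀ a b : ℕ, a ^ 2 + 2 * b ^ 2 ≠ N) :
    overpartitionTuples t N ≡ 0 [MOD 16] := by
  have hgauss : (1 + C 2 * alternatingSquareSeries) * overpartitionGenFun = 1 :=
    one_add_two_mul_alternatingSquareSeries_mul_overpartitionGenFun
  have hdvd := pow_dvd_coeff_pow_of_one_add_C_mul_mul_eq_one hgauss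
    (two_pow_four_dvd_two_pow_mul_coeff_pow
      (fun _ => isSquare_of_coeff_alternatingSquareSeries_ne_zero) h₁ h₂) t
  rw [coeff_overpartitionGenFun_pow] at hdvd
  exact Nat.modEq_zero_iff_dvd.mpr (by exact_mod_cast hdvd)

theorem overpartitionTuples_sixteen_n_fourteen_mod_sixteen (t n : ℕ) :
    overpartitionTuples t (16 * n + 14) ≡ 0 [MOD 16] :=
  overpartitionTuples_sixteen_n_fourteen_mod_sixteen_general t
    (sq_add_sq_ne_sixteen_mul_add_fourteen n) (sq_add_two_mul_sq_ne_sixteen_mul_add_fourteen n)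
end

section
/- For all integers i ≥ 1, all positive integers j that are odd, not divisible by 3, and not a power of 2, and all n ≥ 0, the number of overpartition (3^i·j)-tuples with odd parts satisfies OPT̄_{3^i·j}(3n+2) ≡ 0 (mod 3^{i+1}·2). -/
/-- The number of overpartitions of `n` into odd parts: a partition of `n` into odd
parts together with a choice of which distinct part values are overlined. -/
def overpartitionOddCount (n : ℕ) : ℕ :=
  ∑ p ∈ Nat.Partition.odds n, 2 ^ p.parts.toFinset.card

/-- The number of overpartition `k`-tuples of `n` with odd parts. -/
def overpartitionOddTuples (k n : ℕ) : ℕ :=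
  ∑ c ∈ Finset.Nat.antidiagonalTuple k n, ∏ i, overpartitionOddCount (c i)

/-!
Let `G` be the generating function of overpartitions into odd parts, so that `OPT_k` is generated
by `G ^ k`, and let `θ = X d/dX`. The product `G = ∏_{m odd} (1 + X ^ m) / (1 - X ^ m)` gives
`θ G = G * L`, where `L` has coefficient `2 σ(b)` at odd `b` and `0` at even `b`. Comparing
coefficients in `θ (G ^ k) = k G ^ k L`,
`n * OPT_k(n) = k * ∑_{a + b = n} OPT_k(a) * L_b`.
For `k` divisible by `3 ^ i`, `i ≥ 1`, this shows first that `3 ∣ OPT_k(a)` whenever `3 ∤ a`. If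
`n ≡ 2 [MOD 3]`, each summand on the right has `3 ∤ a` or `b ≡ 2 [MOD 3]`; in the latter case
`3 ∣ σ(b)`, by pairing the divisors `d` and `b / d`. Hence `3 ^ (i + 1) ∣ OPT_k(n)`. Evenness holds
because every nonempty partition has a part that may or may not be overlined.
-/

open Finset PowerSeries ArithmeticFunction
open scoped ArithmeticFunction.sigma PowerSeries.WithPiTopology

section Derivation

variable {R A ι : Type*} [CommSemiring R] [CommSemiring A] [Algebra R A] {D : Derivation R A A}

theorem derivation_prod_eq_prod_mul_sum {u l : ι → A} (h : ∀ i, D (u i) = u i * l i)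
    (s : Finset ι) : D (∏ i ∈ s, u i) = (∏ i ∈ s, u i) * ∑ i ∈ s, l i := by
  classical
  induction s using Finset.induction_on with
  | empty => simp
  | insert a s ha ih =>
    simp only [prod_insert ha, sum_insert ha, Derivation.leibniz, smul_eq_mul, ih, h]
    ring

theorem derivation_eq_mul_of_hasProd [TopologicalSpace A] [T2Space A] [ContinuousMul A]
    (hD : Continuous D) {u l : ι → A} {f g : A} (hu : HasProd u f) (hl : HasSum l g)
    (h : ∀ i, D (u i) = u i * l i) : D f = f * g := by
  have hprod := (hD.tendsto f).comp hu
  simp only [Function.comp_def, derivation_prod_eq_prod_mul_sum h] at hprod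
  exact tendsto_nhds_unique hprod (Filter.Tendsto.mul hu hl)

theorem derivation_pow_eq_nsmul_mul {f g : A} (h : D f = f * g) (k : ℕ) :
    D (f ^ k) = k • (f ^ k * g) := by
  simpa [mul_left_comm, -Derivation.leibniz_pow] using
    derivation_prod_eq_prod_mul_sum (fun _ : Fin k ↦ h) univ

end Derivation

section EulerDerivation

variable (R : Type*) [CommSemiring R]

/-- The Euler operator `X d/dX` on formal power series, which multiplies the `n`-th coefficient
by `n`. -/
noncomputable def eulerDerivation : Derivation R R⟦X⟧ R⟦X⟧ :=
  (X : R⟦X⟧) • derivative R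

variable {R}

theorem coeff_eulerDerivation (f : R⟦X⟧) (n : ℕ) :
    coeff n (eulerDerivation R f) = n * coeff n f := by
  rw [eulerDerivation, Derivation.smul_apply, smul_eq_mul]
  cases n with
  | zero => simp
  | succ n => simp [coeff_succ_X_mul, coeff_derivative, mul_comm]

theorem eulerDerivation_X_pow (m : ℕ) :
    eulerDerivation R (X ^ m : R⟦X⟧) = (m : R⟦X⟧) * X ^ m := by
  ext n
  rw [coeff_eulerDerivation, ← nsmul_eq_mul m, map_nsmul, nsmul_eq_mul, coeff_X_pow]
  split_ifs with h <;> simp [h]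

theorem continuous_eulerDerivation [TopologicalSpace R] [IsTopologicalSemiring R] :
    Continuous (eulerDerivation R) := by
  refine continuous_iff_continuousAt.2 fun f ↦
    (WithPiTopology.tendsto_iff_coeff_tendsto R _ _ _).2 fun n ↦ ?_
  simp only [coeff_eulerDerivation]
  exact ((WithPiTopology.continuous_coeff R n).tendsto f).const_mul _

theorem natCast_dvd_mul_coeff_pow (f : R⟦X⟧) (k n : ℕ) : (k : R) ∣ n * coeff n (f ^ k) := by
  rw [← coeff_eulerDerivation, Derivation.leibniz_pow, map_nsmul, nsmul_eq_mul]
  exact dvd_mul_right _ _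

theorem mul_coeff_pow_eq_of_eulerDerivation_eq {f g : R⟦X⟧} (h : eulerDerivation R f = f * g)
    (k n : ℕ) :
    n * coeff n (f ^ k) = k * ∑ x ∈ antidiagonal n, coeff x.1 (f ^ k) * coeff x.2 g := by
  rw [← coeff_eulerDerivation, derivation_pow_eq_nsmul_mul h, map_nsmul, nsmul_eq_mul, coeff_mul]

theorem pow_succ_dvd_coeff_pow {p : ℕ} (hp : p.Prime) {i k n : ℕ} (hi : i ≠ 0) (hk : p ^ i ∣ k)
    (hn : ¬ p ∣ n) {f g : ℤ⟦X⟧} (h : eulerDerivation ℤ f = f * g)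
    (hg : ∀ b, b ≡ n [MOD p] → (p : ℤ) ∣ coeff b g) :
    (p : ℤ) ^ (i + 1) ∣ coeff n (f ^ k) := by
  have hpZ : Prime (p : ℤ) := Nat.prime_iff_prime_int.1 hp
  have not_dvd_cast {a : ℕ} (ha : ¬ p ∣ a) : ¬ (p : ℤ) ∣ a := mt Int.natCast_dvd_natCast.1 ha
  have hcoeff (a : ℕ) (ha : ¬ p ∣ a) : (p : ℤ) ∣ coeff a (f ^ k) := by
    have hpk : (p : ℤ) ∣ k := Int.natCast_dvd_natCast.2 ((dvd_pow_self p hi).trans hk)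
    exact (hpZ.dvd_or_dvd (hpk.trans (natCast_dvd_mul_coeff_pow f k a))).resolve_left
      (not_dvd_cast ha)
  refine hpZ.pow_dvd_of_dvd_mul_left _ (not_dvd_cast hn) ?_
  rw [mul_coeff_pow_eq_of_eulerDerivation_eq h, pow_succ]
  refine mul_dvd_mul (mod_cast hk) (dvd_sum fun x hx ↦ ?_)
  by_cases ha : p ∣ x.1
  · refine (hg x.2 ?_).mul_left _
    rw [← mem_antidiagonal.1 hx]
    simpa using (Nat.modEq_zero_iff_dvd.2 ha).symm.add_right x.2
  · exact (hcoeff x.1 ha).mul_right _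

theorem eulerDerivation_eq_mul_of_mul_one_sub_X_pow {S : Type*} [CommRing S] {m : ℕ} (hm : m ≠ 0)
    {u l : S⟦X⟧} (hu : u * (1 - X ^ m) = 1 + X ^ m)
    (hl : l * (1 - X ^ (2 * m)) = 2 * (m : S⟦X⟧) * X ^ m) :
    eulerDerivation S u = u * l := by
  have hunit : IsUnit (1 - X ^ m : S⟦X⟧) := isUnit_iff_constantCoeff.2 (by simp [hm])
  have hD := congrArg (eulerDerivation S) hu
  simp only [Derivation.leibniz, map_sub, map_add, smul_eq_mul, Derivation.map_one_eq_zero,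
    eulerDerivation_X_pow] at hD
  rw [mul_comm 2 m, pow_mul] at hl
  -- After multiplication by `(1 - X ^ m) ^ 2`, both sides equal `2 m X ^ m`.
  refine (hunit.pow 2).mul_right_cancel ?_
  linear_combination (1 - X ^ m) * hD + (m * X ^ m - l * (1 - X ^ m)) * hu - hl

end EulerDerivation

theorem coeff_prod_univ_eq_sum_piAntidiag {R ι : Type*} [CommSemiring R] [Fintype ι]
    [DecidableEq ι] (f : ι → R⟦X⟧) (n : ℕ) :
    coeff n (∏ i, f i) = ∑ c ∈ piAntidiag univ n, ∏ i, coeff (c i) (f i) := by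
  rw [coeff_prod]
  exact sum_equiv Finsupp.equivFunOnFinite (by simp) (by simp)

theorem three_dvd_sigma_one {n : ℕ} (hn : n ≡ 2 [MOD 3]) : 3 ∣ σ 1 n := by
  have hadd : ∀ x y : ZMod 3, x * y = 2 → x + y = 0 := by decide
  have hpair : 2 * σ 1 n = ∑ d ∈ n.divisors, (d + n / d) := by
    rw [sum_add_distrib, Nat.sum_div_divisors n fun d ↦ d, sigma_one_apply, two_mul]
  refine Nat.Coprime.dvd_of_dvd_mul_left (by norm_num : Nat.Coprime 3 2) ?_
  rw [hpair]
  refine dvd_sum fun d hd ↦ (ZMod.natCast_eq_zero_iff _ 3).1 ?_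
  push_cast
  refine hadd _ _ ?_
  rw [← Nat.cast_mul, Nat.mul_div_cancel' (Nat.dvd_of_mem_divisors hd)]
  exact (ZMod.natCast_eq_natCast_iff _ _ _).2 hn

theorem hasSum_ite_succ_dvd {M : Type*} [AddCommMonoid M] [TopologicalSpace M] {n : ℕ} (hn : n ≠ 0)
    (f : ℕ → M) : HasSum (fun i ↦ if i + 1 ∣ n then f (i + 1) else 0) (∑ d ∈ n.divisors, f d) := by
  have hsum : ∑ d ∈ n.divisors, f d = ∑ i ∈ range n, if i + 1 ∣ n then f (i + 1) else 0 := by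
    rw [Nat.divisors, sum_filter, sum_Ico_eq_sum_range]
    simp [add_comm]
  rw [hsum]
  refine hasSum_sum_of_ne_finset_zero fun i hi ↦ if_neg fun hdvd ↦ hi ?_
  exact mem_range.2 (Nat.le_of_dvd (Nat.pos_of_ne_zero hn) hdvd)

/-- The generating function of overpartitions into odd parts. -/
noncomputable def overpartitionOddSeries : ℤ⟦X⟧ :=
  mk fun n ↦ (overpartitionOddCount n : ℤ)

/-- The factor `(1 + X ^ m) / (1 - X ^ m)`, for odd `m`, of the product formula for
`overpartitionOddSeries`; for even `m` it is `1`. It is written in the expanded form in which it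
occurs in `Nat.Partition.hasProd_genFun`. -/
noncomputable def overpartitionOddFactor (m : ℕ) : ℤ⟦X⟧ :=
  1 + ∑' j : ℕ, (if Odd m then (2 : ℤ) else 0) • X ^ (m * (j + 1))

/-- The logarithmic derivative `2 m X ^ m / (1 - X ^ (2 * m))`, for odd `m`, of
`overpartitionOddFactor m` with respect to `eulerDerivation`; for even `m` it is `0`, since an even
number has no odd multiple. -/
noncomputable def overpartitionOddFactorLogDeriv (m : ℕ) : ℤ⟦X⟧ :=
  mk fun n ↦ if Odd n ∧ m ∣ n then 2 * (m : ℤ) else 0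

/-- The logarithmic derivative of `overpartitionOddSeries` with respect to `eulerDerivation`. -/
noncomputable def overpartitionOddLogDeriv : ℤ⟦X⟧ :=
  mk fun n ↦ if Odd n then 2 * (σ 1 n : ℤ) else 0

theorem overpartitionOddSeries_eq_genFun :
    overpartitionOddSeries = Nat.Partition.genFun fun m _ ↦ if Odd m then (2 : ℤ) else 0 := by
  ext n
  simp [overpartitionOddSeries, overpartitionOddCount, Nat.Partition.odds,
    Nat.Partition.restricted, sum_filter, Finsupp.prod, prod_ite_zero]

theorem hasProd_overpartitionOddFactor :
    HasProd (fun i ↦ overpartitionOddFactor (i + 1)) overpartitionOddSeries :=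
  overpartitionOddSeries_eq_genFun ▸
    Nat.Partition.hasProd_genFun fun m _ ↦ if Odd m then (2 : ℤ) else 0

theorem overpartitionOddFactor_of_even {m : ℕ} (hm : Even m) : overpartitionOddFactor m = 1 := by
  simp [overpartitionOddFactor, Nat.not_odd_iff_even.2 hm]

theorem overpartitionOddFactor_mul_one_sub_X_pow {m : ℕ} (hm : Odd m) :
    overpartitionOddFactor m * (1 - X ^ m) = 1 + X ^ m := by
  have hconst : constantCoeff (X ^ m : ℤ⟦X⟧) = 0 := by simp [hm.pos.ne']
  have hgeom := WithPiTopology.tsum_pow_mul_one_sub_of_constantCoeff_eq_zero hconst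
  have hfactor : overpartitionOddFactor m = 1 + 2 * X ^ m * ∑' j : ℕ, (X ^ m : ℤ⟦X⟧) ^ j := by
    rw [← (WithPiTopology.summable_pow_of_constantCoeff_eq_zero hconst).tsum_mul_left]
    simp [overpartitionOddFactor, hm, pow_mul, pow_succ', two_mul, add_mul, two_smul]
  rw [hfactor]
  linear_combination 2 * X ^ m * hgeom

theorem overpartitionOddFactorLogDeriv_of_even {m : ℕ} (hm : Even m) :
    overpartitionOddFactorLogDeriv m = 0 := by
  ext n
  simp only [overpartitionOddFactorLogDeriv, coeff_mk, _root_.map_zero, ite_eq_right_iff]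
  exact fun ⟨hn, hmn⟩ ↦ absurd (hm.trans_dvd hmn) (Nat.not_even_iff_odd.2 hn)

theorem overpartitionOddFactorLogDeriv_mul_one_sub_X_pow {m : ℕ} (hm : Odd m) :
    overpartitionOddFactorLogDeriv m * (1 - X ^ (2 * m)) = 2 * (m : ℤ⟦X⟧) * X ^ m := by
  ext n
  have hC : (2 * (m : ℤ⟦X⟧) * X ^ m) = C (2 * (m : ℤ)) * X ^ m := by simp
  rw [hC, mul_sub, mul_one, map_sub, coeff_mul_X_pow', coeff_C_mul, coeff_X_pow]
  simp only [overpartitionOddFactorLogDeriv, coeff_mk]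
  rcases le_or_gt (2 * m) n with hmn | hmn
  · have hdvd : m ∣ n - 2 * m ↔ m ∣ n := Nat.dvd_sub_iff_left hmn (dvd_mul_left m 2)
    have hodd : Odd (n - 2 * m) ↔ Odd n := by grind
    have hne : n ≠ m := by have := hm.pos; omega
    simp [hmn, hdvd, hodd, hne]
  · have hiff : Odd n ∧ m ∣ n ↔ n = m := by
      refine ⟨?_, by rintro rfl; exact ⟨hm, dvd_rfl⟩⟩
      rintro ⟨hn, t, rfl⟩
      have ht_lt : t < 2 := by nlinarith
      have ht_pos : 0 < t := Nat.pos_of_mul_pos_left hn.pos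
      rw [show t = 1 by omega, mul_one]
    simp [hmn.not_ge, hiff]

theorem eulerDerivation_overpartitionOddFactor (m : ℕ) :
    eulerDerivation ℤ (overpartitionOddFactor m) =
      overpartitionOddFactor m * overpartitionOddFactorLogDeriv m := by
  rcases Nat.even_or_odd m with hm | hm
  · simp [overpartitionOddFactor_of_even hm, overpartitionOddFactorLogDeriv_of_even hm]
  · exact eulerDerivation_eq_mul_of_mul_one_sub_X_pow hm.pos.ne'
      (overpartitionOddFactor_mul_one_sub_X_pow hm)
      (overpartitionOddFactorLogDeriv_mul_one_sub_X_pow hm)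

theorem hasSum_overpartitionOddFactorLogDeriv :
    HasSum (fun i ↦ overpartitionOddFactorLogDeriv (i + 1)) overpartitionOddLogDeriv := by
  refine (WithPiTopology.hasSum_iff_hasSum_coeff ℤ).2 fun n ↦ ?_
  simp only [overpartitionOddFactorLogDeriv, overpartitionOddLogDeriv, coeff_mk]
  by_cases hn : Odd n
  · simpa [hn, sigma_one_apply, mul_sum] using
      hasSum_ite_succ_dvd hn.pos.ne' fun d ↦ 2 * (d : ℤ)
  · simp [hn]

theorem eulerDerivation_overpartitionOddSeries :
    eulerDerivation ℤ overpartitionOddSeries =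
      overpartitionOddSeries * overpartitionOddLogDeriv :=
  derivation_eq_mul_of_hasProd continuous_eulerDerivation hasProd_overpartitionOddFactor
    hasSum_overpartitionOddFactorLogDeriv fun _ ↦ eulerDerivation_overpartitionOddFactor _

theorem three_dvd_coeff_overpartitionOddLogDeriv {n : ℕ} (hn : n ≡ 2 [MOD 3]) :
    3 ∣ coeff n overpartitionOddLogDeriv := by
  rw [overpartitionOddLogDeriv, coeff_mk]
  split_ifs
  · exact (mod_cast three_dvd_sigma_one hn : (3 : ℤ) ∣ σ 1 n).mul_left 2
  · exact dvd_zero 3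

theorem natCast_overpartitionOddTuples (k n : ℕ) :
    (overpartitionOddTuples k n : ℤ) = coeff n (overpartitionOddSeries ^ k) := by
  rw [← Fin.prod_const k, coeff_prod_univ_eq_sum_piAntidiag,
    piAntidiag_univ_fin_eq_antidiagonalTuple]
  simp [overpartitionOddTuples, overpartitionOddSeries]

theorem two_dvd_overpartitionOddCount {n : ℕ} (hn : n ≠ 0) : 2 ∣ overpartitionOddCount n := by
  refine dvd_sum fun p _ ↦ dvd_pow_self 2 fun hcard ↦ hn ?_
  rw [card_eq_zero, Multiset.toFinset_eq_empty] at hcard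
  rw [← p.parts_sum, hcard, Multiset.sum_zero]

theorem two_dvd_overpartitionOddTuples (k : ℕ) {n : ℕ} (hn : n ≠ 0) :
    2 ∣ overpartitionOddTuples k n := by
  refine dvd_sum fun c hc ↦ ?_
  rw [Nat.mem_antidiagonalTuple] at hc
  obtain ⟨i, hi, hci⟩ := exists_ne_zero_of_sum_ne_zero (hc.trans_ne hn)
  exact (two_dvd_overpartitionOddCount hci).trans (dvd_prod_of_mem _ hi)

theorem overpartitionOddTuples_odd_three_n_two_general (i k n : ℕ) (hi : 1 ≤ i) (hk : 3 ^ i ∣ k) :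
    overpartitionOddTuples k (3 * n + 2) ≡ 0 [MOD 3 ^ (i + 1) * 2] := by
  have h_three : 3 ^ (i + 1) ∣ overpartitionOddTuples k (3 * n + 2) := by
    have hcoeff := pow_succ_dvd_coeff_pow Nat.prime_three (by omega) hk
      (by omega : ¬ 3 ∣ 3 * n + 2) eulerDerivation_overpartitionOddSeries fun b hb ↦
        three_dvd_coeff_overpartitionOddLogDeriv (hb.trans (by simp [Nat.ModEq]))
    rw [← natCast_overpartitionOddTuples] at hcoeff
    exact_mod_cast hcoeff
  have h_two : 2 ∣ overpartitionOddTuples k (3 * n + 2) :=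
    two_dvd_overpartitionOddTuples k (by omega)
  have hcop : Nat.Coprime (3 ^ (i + 1)) 2 := Nat.Coprime.pow_left _ (by norm_num)
  exact Nat.modEq_zero_iff_dvd.2 (hcop.mul_dvd_of_dvd_of_dvd h_three h_two)

theorem overpartitionOddTuples_odd_three_n_two (i j n : ℕ) (hi : 1 ≤ i) (hj : 0 < j)
    (hjodd : Odd j) (hj3 : ¬ (3 ∣ j)) (hjpow : ¬ ∃ m : ℕ, j = 2 ^ m) :
    overpartitionOddTuples (3 ^ i * j) (3 * n + 2) ≡ 0 [MOD 3 ^ (i + 1) * 2] :=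
  overpartitionOddTuples_odd_three_n_two_general i _ n hi (dvd_mul_right _ _)
end
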